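/- Let b ≥ 3 and n ≥ b+1 be integers and let k be an integer with 3 ≤ k ≤ b. Then σ_{k,max}(b,n) = 1. -/

import Mathlib

open scoped BigOperators
open Classical

/-- The Dirichlet energy of a function on a finite graph: `∑_{edges xy} (f x - f y)^2`. -/
noncomputable def dirichletEnergy {V : Type*} [Fintype V] (G : SimpleGraph V) (f : V → ℝ) : ℝ :=
  (∑ x : V, ∑ y : V, if G.Adj x y then (f x - f y) ^ 2 else 0) / 2

/-- The `k`-th Steklov (Dirichlet-to-Neumann) eigenvalue (1-indexed, in increasing order
with multiplicity) of a finite graph `G` with boundary `B`, via the variational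
(Courant–Fischer) characterization. -/
noncomputable def steklovEig {V : Type*} [Fintype V] (G : SimpleGraph V) (B : Finset V)
    (k : ℕ) : ℝ :=
  sInf { t : ℝ | ∃ F : Submodule ℝ (V → ℝ),
    Module.finrank ℝ (F.map (LinearMap.funLeft ℝ ℝ (fun x : {v // v ∈ B} => (x : V)))) = k ∧
    ∀ f ∈ F, dirichletEnergy G f ≤ t * ∑ x ∈ B, (f x) ^ 2 }

/-- The set of leaves (vertices of degree 1) of a finite graph, as a `Finset`. -/
noncomputable def leavesFinset {V : Type*} [Fintype V] (G : SimpleGraph V) : Finset V :=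
  Finset.univ.filter fun v => G.degree v = 1

/-- `σ_{k,max}(b,n)`: the maximum of the `k`-th Steklov eigenvalue over all trees with
`b` leaves (as boundary) and `n` vertices. -/
noncomputable def sigmaMax (k b n : ℕ) : ℝ :=
  sSup { s : ℝ | ∃ G : SimpleGraph (Fin n), G.IsTree ∧ (leavesFinset G).card = b ∧
    s = steklovEig G (leavesFinset G) k }

/-- `σ̃_{2,max}(D,n)`: the maximum of the first nontrivial Steklov eigenvalue over all
trees with diameter `D` and `n` vertices. -/
noncomputable def sigmaTildeMax (D n : ℕ) : ℝ :=
  sSup { s : ℝ | ∃ G : SimpleGraph (Fin n), G.IsTree ∧ G.diam = D ∧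
    s = steklovEig G (leavesFinset G) 2 }

/-! Any two leaves of a tree with at least three vertices are non-adjacent, so a function
supported on the leaves has Dirichlet energy equal to the sum of its squares; the space of such
functions gives `σ_k ≤ 1`. Equality is attained by the broom, obtained from a path by attaching
the other leaves to its first vertex `c`. If `e` denotes the last vertex of the path, every leaf
other than `e` is adjacent to `c`, so the energy of a function vanishing at `c` and `e` is at
least the sum of its squares over the leaves. Two linear conditions cannot kill a space of
dimension `k ≥ 3`, so `σ_k ≥ 1`. -/

section LinearAlgebra

variable {K E W U : Type*} [Field K] [AddCommGroup E] [Module K E] [AddCommGroup W] [Module K W]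
  [AddCommGroup U] [Module K U]

theorem exists_submodule_finrank_eq {k : ℕ} (hk : k ≤ Module.finrank K E) :
    ∃ F : Submodule K E, Module.finrank K F = k := by
  obtain ⟨v, hv⟩ := exists_linearIndependent_of_le_finrank hk
  exact ⟨Submodule.span K (Set.range v), by simpa using finrank_span_eq_card hv⟩

theorem exists_mem_ker_notMem_ker_of_finrank_lt [FiniteDimensional K U] (F : Submodule K E)
    (L : E →ₗ[K] W) (P : E →ₗ[K] U) (h : Module.finrank K U < Module.finrank K (F.map L)) :
    ∃ f ∈ F, P f = 0 ∧ L f ≠ 0 := by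
  have : FiniteDimensional K (F.map L) := Module.finite_of_finrank_pos (by omega)
  obtain ⟨lift, hlift⟩ := (L.submoduleMap F).exists_rightInverse_of_surjective
    (LinearMap.range_eq_top.2 (L.submoduleMap_surjective F))
  obtain ⟨w, hw, hw₀⟩ := (Submodule.ne_bot_iff _).1 <|
    LinearMap.ker_ne_bot_of_finrank_lt (f := P.domRestrict F ∘ₗ lift) h
  have hLw : L (lift w) = w := congrArg Subtype.val (LinearMap.congr_fun hlift w)
  exact ⟨lift w, (lift w).2, hw, fun h₀ => hw₀ (Subtype.ext (hLw ▸ h₀))⟩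

end LinearAlgebra

section DirichletEnergy

variable {V : Type*} [Fintype V] {G : SimpleGraph V} {B S : Finset V} {f : V → ℝ}

theorem sum_sum_ite_adj (G : SimpleGraph V) (g : V → ℝ) :
    ∑ x, ∑ y, (if G.Adj x y then g x else 0) = ∑ x, G.degree x * g x := by
  simp only [SimpleGraph.degree_eq_sum_if_adj, Finset.sum_mul, ite_mul, one_mul, zero_mul]

theorem sum_sum_ite_adj' (G : SimpleGraph V) (g : V → ℝ) :
    ∑ x, ∑ y, (if G.Adj x y then g y else 0) = ∑ x, G.degree x * g x := by
  rw [Finset.sum_comm, ← sum_sum_ite_adj]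
  simp only [G.adj_comm]

theorem dirichletEnergy_le_mul_sum_degree_mul_sq {c : ℝ}
    (hc : ∀ x y, G.Adj x y → (f x - f y) ^ 2 ≤ c * (f x ^ 2 + f y ^ 2)) :
    dirichletEnergy G f ≤ c * ∑ x, G.degree x * f x ^ 2 := by
  have key : ∑ x, ∑ y, (if G.Adj x y then (f x - f y) ^ 2 else 0) ≤
      ∑ x, ∑ y, ((if G.Adj x y then c * f x ^ 2 else 0) +
        (if G.Adj x y then c * f y ^ 2 else 0)) := by
    gcongr with x _ y _
    split_ifs with hxy
    · linarith [hc x y hxy]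
    · simp
  simp only [Finset.sum_add_distrib, sum_sum_ite_adj G fun x => c * f x ^ 2,
    sum_sum_ite_adj' G fun x => c * f x ^ 2, mul_left_comm _ c, ← Finset.mul_sum] at key
  rw [dirichletEnergy]
  linarith

theorem dirichletEnergy_le_mul_sum_sq {c d : ℝ} (hc₀ : 0 ≤ c)
    (hc : ∀ x y, G.Adj x y → (f x - f y) ^ 2 ≤ c * (f x ^ 2 + f y ^ 2))
    (hd : ∀ x ∈ B, (G.degree x : ℝ) ≤ d) (hf : ∀ x ∉ B, f x = 0) :
    dirichletEnergy G f ≤ c * d * ∑ x ∈ B, f x ^ 2 := by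
  calc dirichletEnergy G f ≤ c * ∑ x, G.degree x * f x ^ 2 :=
        dirichletEnergy_le_mul_sum_degree_mul_sq hc
    _ = c * ∑ x ∈ B, G.degree x * f x ^ 2 := by
        rw [Finset.sum_subset B.subset_univ fun x _ hx => by simp [hf x hx]]
    _ ≤ c * ∑ x ∈ B, d * f x ^ 2 := by gcongr with x hx; exact hd x hx
    _ = c * d * ∑ x ∈ B, f x ^ 2 := by rw [← Finset.mul_sum, mul_assoc]

theorem dirichletEnergy_le_of_isIndepSet {d : ℝ} (hB : G.IsIndepSet (B : Set V))
    (hd : ∀ x ∈ B, (G.degree x : ℝ) ≤ d) (hf : ∀ x ∉ B, f x = 0) :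
    dirichletEnergy G f ≤ d * ∑ x ∈ B, f x ^ 2 := by
  suffices hc : ∀ x y, G.Adj x y → (f x - f y) ^ 2 ≤ 1 * (f x ^ 2 + f y ^ 2) by
    simpa only [one_mul] using dirichletEnergy_le_mul_sum_sq zero_le_one hc hd hf
  intro x y hxy
  have hfxy : f x * f y = 0 := by
    by_contra hne
    obtain ⟨hx, hy⟩ := mul_ne_zero_iff.1 hne
    exact hB (by simpa using mt (hf x) hx) (by simpa using mt (hf y) hy) hxy.ne hxy
  linarith

theorem sum_compl_sum_le_dirichletEnergy (G : SimpleGraph V) (S : Finset V) (f : V → ℝ) :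
    ∑ x ∈ Sᶜ, ∑ y ∈ S, (if G.Adj x y then (f x - f y) ^ 2 else 0) ≤ dirichletEnergy G f := by
  set w : V → V → ℝ := fun x y => if G.Adj x y then (f x - f y) ^ 2 else 0 with hw
  have w_comm (x y) : w x y = w y x := by simp only [hw, G.adj_comm, sub_sq_comm]
  have hswap : ∑ x ∈ S, ∑ y ∈ Sᶜ, w x y = ∑ x ∈ Sᶜ, ∑ y ∈ S, w x y := by
    rw [Finset.sum_comm]
    simp only [w_comm]
  have htotal : ∑ x ∈ S, ∑ y ∈ Sᶜ, w x y + ∑ x ∈ Sᶜ, ∑ y ∈ S, w x y ≤ ∑ x, ∑ y, w x y := by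
    rw [← Finset.sum_add_sum_compl S]
    gcongr <;> exact Finset.subset_univ _
  change _ ≤ (∑ x, ∑ y, w x y) / 2
  linarith

theorem dirichletEnergy_nonneg (G : SimpleGraph V) (f : V → ℝ) : 0 ≤ dirichletEnergy G f := by
  simpa using sum_compl_sum_le_dirichletEnergy G ∅ f

theorem sum_sq_le_dirichletEnergy (hS : ∀ x ∈ B, x ∉ S → ∃ s ∈ S, G.Adj x s)
    (hf : ∀ s ∈ S, f s = 0) : ∑ x ∈ B, f x ^ 2 ≤ dirichletEnergy G f := by
  have hstar (x) (hx : x ∈ B \ S) :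
      f x ^ 2 ≤ ∑ y ∈ S, (if G.Adj x y then (f x - f y) ^ 2 else 0) := by
    obtain ⟨hxB, hxS⟩ := Finset.mem_sdiff.1 hx
    obtain ⟨s, hs, hxs⟩ := hS x hxB hxS
    calc f x ^ 2 = if G.Adj x s then (f x - f s) ^ 2 else 0 := by simp [hxs, hf s hs]
      _ ≤ _ := Finset.single_le_sum (f := fun y => if G.Adj x y then (f x - f y) ^ 2 else 0)
        (fun y _ => by positivity) hs
  calc ∑ x ∈ B, f x ^ 2 = ∑ x ∈ B \ S, f x ^ 2 := by
        refine (Finset.sum_subset Finset.sdiff_subset fun x hxB hx => ?_).symm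
        simp [hf x (by simpa [hxB] using hx)]
    _ ≤ ∑ x ∈ B \ S, ∑ y ∈ S, (if G.Adj x y then (f x - f y) ^ 2 else 0) := Finset.sum_le_sum hstar
    _ ≤ ∑ x ∈ Sᶜ, ∑ y ∈ S, (if G.Adj x y then (f x - f y) ^ 2 else 0) :=
        Finset.sum_le_sum_of_subset_of_nonneg (fun x hx => by simp_all) fun x _ _ => by positivity
    _ ≤ dirichletEnergy G f := sum_compl_sum_le_dirichletEnergy G S f

end DirichletEnergy

section SteklovEigenvalue

variable {V : Type*} [Fintype V] {G : SimpleGraph V} {B S : Finset V} {k : ℕ} {s t : ℝ}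

/-- Restriction of functions to the boundary `B`. -/
abbrev boundaryRestriction (B : Finset V) : (V → ℝ) →ₗ[ℝ] ({v // v ∈ B} → ℝ) :=
  LinearMap.funLeft ℝ ℝ fun x : {v // v ∈ B} => (x : V)

/-- The numbers whose infimum is the `k`-th Steklov eigenvalue: `t` bounds the Rayleigh quotient on
a space of functions whose restrictions to `B` form a `k`-dimensional space. -/
def IsSteklovBound (G : SimpleGraph V) (B : Finset V) (k : ℕ) (t : ℝ) : Prop :=
  ∃ F : Submodule ℝ (V → ℝ), Module.finrank ℝ (F.map (boundaryRestriction B)) = k ∧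
    ∀ f ∈ F, dirichletEnergy G f ≤ t * ∑ x ∈ B, f x ^ 2

theorem steklovEig_eq_sInf (G : SimpleGraph V) (B : Finset V) (k : ℕ) :
    steklovEig G B k = sInf {t | IsSteklovBound G B k t} :=
  rfl

theorem isSteklovBound_of_forall_le (hk : k ≤ B.card)
    (h : ∀ f : V → ℝ, (∀ x ∉ B, f x = 0) → dirichletEnergy G f ≤ t * ∑ x ∈ B, f x ^ 2) :
    IsSteklovBound G B k t := by
  let extend := Function.ExtendByZero.linearMap ℝ (fun x : {v // v ∈ B} => (x : V))
  have hextend : (boundaryRestriction B).comp extend = LinearMap.id := by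
    ext g x
    simp [extend, LinearMap.funLeft_apply]
  obtain ⟨W, hW⟩ : ∃ W : Submodule ℝ ({v // v ∈ B} → ℝ), Module.finrank ℝ W = k :=
    exists_submodule_finrank_eq (by simpa using hk)
  refine ⟨W.map extend, by rw [← Submodule.map_comp, hextend, Submodule.map_id, hW], ?_⟩
  rintro _ ⟨g, -, rfl⟩
  exact h _ fun x hx => Function.extend_apply' _ _ _ fun ⟨y, hy⟩ => hx (hy ▸ y.2)

theorem exists_isSteklovBound (G : SimpleGraph V) (hk : k ≤ B.card) :
    ∃ t, IsSteklovBound G B k t := by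
  refine ⟨2 * Fintype.card V, isSteklovBound_of_forall_le hk fun f hf => ?_⟩
  refine dirichletEnergy_le_mul_sum_sq zero_le_two (fun x y _ => ?_) (fun x _ => ?_) hf
  · linarith [sq_nonneg (f x + f y)]
  · exact_mod_cast (G.degree_lt_card_verts x).le

theorem IsSteklovBound.le_of_forall_le (ht : IsSteklovBound G B k t) (hS : S.card < k)
    (h : ∀ f : V → ℝ, (∀ x ∈ S, f x = 0) → s * ∑ x ∈ B, f x ^ 2 ≤ dirichletEnergy G f) :
    s ≤ t := by
  obtain ⟨F, rfl, hF⟩ := ht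
  obtain ⟨f, hfF, hfS, hfB⟩ : ∃ f ∈ F, boundaryRestriction S f = 0 ∧ boundaryRestriction B f ≠ 0 :=
    exists_mem_ker_notMem_ker_of_finrank_lt F _ _ (by simpa using hS)
  have hpos : 0 < ∑ x ∈ B, f x ^ 2 := by
    obtain ⟨x, hx⟩ := Function.ne_iff.1 hfB
    exact Finset.sum_pos' (fun y _ => sq_nonneg (f y)) ⟨x, x.2, sq_pos_of_ne_zero hx⟩
  have hle : s * ∑ x ∈ B, f x ^ 2 ≤ t * ∑ x ∈ B, f x ^ 2 :=
    (h f fun x hx => congrFun hfS ⟨x, hx⟩).trans (hF f hfF)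
  exact le_of_mul_le_mul_right hle hpos

theorem IsSteklovBound.nonneg (ht : IsSteklovBound G B k t) (hk : 0 < k) : 0 ≤ t :=
  ht.le_of_forall_le (S := ∅) (by simpa using hk) fun f _ => by
    simpa using dirichletEnergy_nonneg G f

theorem steklovEig_le_of_isIndepSet (hB : G.IsIndepSet (B : Set V))
    (hd : ∀ x ∈ B, (G.degree x : ℝ) ≤ t) (hk₀ : 0 < k) (hk : k ≤ B.card) :
    steklovEig G B k ≤ t := by
  rw [steklovEig_eq_sInf]
  exact csInf_le ⟨0, fun _ (ht : IsSteklovBound G B k _) => ht.nonneg hk₀⟩ <|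
    isSteklovBound_of_forall_le hk fun _ => dirichletEnergy_le_of_isIndepSet hB hd

theorem one_le_steklovEig (hS : ∀ x ∈ B, x ∉ S → ∃ s ∈ S, G.Adj x s) (hSk : S.card < k)
    (hk : k ≤ B.card) : 1 ≤ steklovEig G B k := by
  rw [steklovEig_eq_sInf]
  refine le_csInf (exists_isSteklovBound G hk) fun t (ht : IsSteklovBound G B k t) => ?_
  refine ht.le_of_forall_le hSk fun f hf => ?_
  simpa only [one_mul] using sum_sq_le_dirichletEnergy hS hf

end SteklovEigenvalue

section Leaves

variable {V : Type*} [Fintype V] {G : SimpleGraph V}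

theorem mem_leavesFinset {x : V} : x ∈ leavesFinset G ↔ G.degree x = 1 := by
  simp [leavesFinset]

theorem mem_leavesFinset_iff_existsUnique_adj {x : V} :
    x ∈ leavesFinset G ↔ ∃! y, G.Adj x y := by
  rw [mem_leavesFinset, SimpleGraph.degree_eq_one_iff_existsUnique_adj]

theorem isIndepSet_leavesFinset (hG : G.Preconnected) (hV : 2 < Fintype.card V) :
    G.IsIndepSet (leavesFinset G : Set V) := by
  intro u hu v hv _ huv
  have huniq {x : V} (hx : x ∈ leavesFinset G) {y z : V} : G.Adj x y → G.Adj x z → y = z :=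
    (mem_leavesFinset_iff_existsUnique_adj.1 hx).unique
  obtain ⟨w, hw⟩ : ∃ w, w ∉ ({u, v} : Finset V) := by
    by_contra! h
    have := Finset.card_le_two (a := u) (b := v)
    rw [Finset.eq_univ_of_forall h, Finset.card_univ] at this
    omega
  obtain ⟨p⟩ := hG u w
  obtain ⟨⟨⟨x, y⟩, hxy⟩, -, hx, hy⟩ := p.exists_boundary_dart {u, v} (by simp) (by simpa using hw)
  obtain rfl | rfl : x = u ∨ x = v := hx
  · exact hy (Or.inr (huniq hu hxy huv))
  · exact hy (Or.inl (huniq hv hxy huv.symm))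

theorem steklovEig_leavesFinset_le_one (hG : G.Preconnected) (hV : 2 < Fintype.card V) {k : ℕ}
    (hk₀ : 0 < k) (hk : k ≤ (leavesFinset G).card) : steklovEig G (leavesFinset G) k ≤ 1 :=
  steklovEig_le_of_isIndepSet (isIndepSet_leavesFinset hG hV)
    (fun x hx => by rw [mem_leavesFinset.1 hx, Nat.cast_one]) hk₀ hk

end Leaves

section ParentGraph

variable {V : Type*} {p : V → V} {r : V}

/-- The graph joining every vertex `x` to its parent `p x`. A root is encoded as a fixed point
of `p`. -/
def parentGraph (p : V → V) : SimpleGraph V :=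
  SimpleGraph.fromRel fun x y => p x = y

theorem parentGraph_adj {x y : V} : (parentGraph p).Adj x y ↔ x ≠ y ∧ (p x = y ∨ p y = x) :=
  SimpleGraph.fromRel_adj _ x y

theorem edgeSet_parentGraph_subset (hr : p r = r) :
    (parentGraph p).edgeSet ⊆ (fun x => s(x, p x)) '' {r}ᶜ := by
  have hne {x y : V} (hxy : x ≠ y) (h : p x = y) : x ≠ r := fun hx => hxy (by rw [← h, hx, hr])
  intro e
  induction e using Sym2.ind with
  | _ x y =>
    intro he
    obtain ⟨hxy, rfl | rfl⟩ := parentGraph_adj.1 ((parentGraph p).mem_edgeSet.1 he)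
    · exact ⟨x, hne hxy rfl, rfl⟩
    · exact ⟨y, hne hxy.symm rfl, Sym2.eq_swap⟩

variable [Preorder V]

theorem parentGraph_adj_parent (hp : ∀ x ≠ r, p x < x) {x : V} (hx : x ≠ r) :
    (parentGraph p).Adj x (p x) :=
  parentGraph_adj.2 ⟨(hp x hx).ne', Or.inl rfl⟩

theorem parentGraph_connected [WellFoundedLT V] (hp : ∀ x ≠ r, p x < x) :
    (parentGraph p).Connected := by
  have hroot (x) : (parentGraph p).Reachable x r := by
    induction x using WellFoundedLT.induction with
    | ind x ih =>
      obtain rfl | hx := eq_or_ne x r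
      · rfl
      · exact (parentGraph_adj_parent hp hx).reachable.trans (ih _ (hp x hx))
  exact (SimpleGraph.connected_iff_exists_forall_reachable _).2 ⟨r, fun x => (hroot x).symm⟩

theorem parentGraph_isTree [Finite V] (hr : p r = r) (hp : ∀ x ≠ r, p x < x) :
    (parentGraph p).IsTree := by
  have hconn := parentGraph_connected hp
  refine SimpleGraph.isTree_iff_connected_and_card.2
    ⟨hconn, le_antisymm ?_ hconn.card_vert_le_card_edgeSet_add_one⟩
  calc Nat.card (parentGraph p).edgeSet + 1
      ≤ ((fun x => s(x, p x)) '' {r}ᶜ).ncard + 1 := by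
        gcongr
        exact Set.ncard_le_ncard (edgeSet_parentGraph_subset hr)
    _ ≤ ({r}ᶜ : Set V).ncard + 1 := by gcongr; exact Set.ncard_image_le
    _ = Nat.card V := by
      rw [← Set.ncard_add_ncard_compl {r}, Set.ncard_singleton, add_comm]

variable [Fintype V]

theorem mem_leavesFinset_parentGraph (hr : p r = r) (hp : ∀ x ≠ r, p x < x) {x : V}
    (hx : x ≠ r) : x ∈ leavesFinset (parentGraph p) ↔ x ∉ Set.range p := by
  rw [mem_leavesFinset_iff_existsUnique_adj]
  constructor
  · rintro hleaf ⟨y, rfl⟩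
    have hy : y ≠ r := fun h => hx (by rw [h, hr])
    exact ((hp _ hx).trans (hp y hy)).ne
      (hleaf.unique (parentGraph_adj_parent hp hx) (parentGraph_adj_parent hp hy).symm)
  · intro hchild
    refine ⟨p x, parentGraph_adj_parent hp hx, fun y hxy => ?_⟩
    obtain ⟨-, h | h⟩ := parentGraph_adj.1 hxy
    · exact h.symm
    · exact absurd ⟨y, h⟩ hchild

theorem root_notMem_leavesFinset_parentGraph (hp : ∀ x ≠ r, p x < x) {x y : V} (hx : x ≠ r)
    (hy : y ≠ r) (hxy : x ≠ y) (hpx : p x = r) (hpy : p y = r) :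
    r ∉ leavesFinset (parentGraph p) := fun hleaf =>
  hxy <| (mem_leavesFinset_iff_existsUnique_adj.1 hleaf).unique
    (hpx ▸ parentGraph_adj_parent hp hx).symm (hpy ▸ parentGraph_adj_parent hp hy).symm

end ParentGraph

section Broom

variable {n m : ℕ}

/-- The parent function of the broom: `0, 1, …, m` is a path, and every vertex beyond `m` hangs
on `0`. Truncated subtraction makes the root `0` its own parent. -/
def broomParent (n m : ℕ) (i : Fin n) : Fin n :=
  ⟨if i.1 ≤ m then i.1 - 1 else 0, by split_ifs <;> omega⟩

/-- The broom on `n` vertices whose handle is a path of length `m` starting at the vertex to which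
the bristles are attached. -/
def broom (n m : ℕ) : SimpleGraph (Fin n) :=
  parentGraph (broomParent n m)

theorem mem_range_broomParent (hm : 0 < m) (hn : m < n) {x : Fin n} :
    x ∈ Set.range (broomParent n m) ↔ x.1 < m := by
  constructor
  · rintro ⟨y, rfl⟩
    simp only [broomParent]
    split_ifs <;> omega
  · intro hx
    exact ⟨⟨x + 1, by omega⟩, Fin.ext (by simp [broomParent, Nat.succ_le_of_lt hx])⟩

variable [NeZero n]

theorem broomParent_zero : broomParent n m 0 = 0 :=
  Fin.ext (by simp [broomParent])

theorem broomParent_lt {x : Fin n} (hx : x ≠ 0) : broomParent n m x < x := by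
  have hx_pos : 0 < x.1 := Fin.pos_iff_ne_zero.2 hx
  simp only [Fin.lt_def, broomParent]
  split_ifs <;> omega

theorem broomParent_of_lt {x : Fin n} (hx : m < x.1) : broomParent n m x = 0 :=
  Fin.ext (by simp [broomParent, hx.not_ge])

theorem broom_isTree : (broom n m).IsTree :=
  parentGraph_isTree broomParent_zero fun _ => broomParent_lt

theorem broom_adj_zero {x : Fin n} (hx : m < x.1) : (broom n m).Adj x 0 :=
  broomParent_of_lt hx ▸ parentGraph_adj_parent (fun _ => broomParent_lt)
    (Fin.pos_iff_ne_zero.1 (m.zero_le.trans_lt hx))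

theorem mem_leavesFinset_broom (hm : 0 < m) (hn : m + 1 < n) {x : Fin n} :
    x ∈ leavesFinset (broom n m) ↔ m ≤ x.1 := by
  obtain rfl | hx := eq_or_ne x 0
  · have hroot : 0 ∉ leavesFinset (broom n m) :=
      root_notMem_leavesFinset_parentGraph (x := ⟨1, by omega⟩) (y := ⟨m + 1, hn⟩)
        (fun _ => broomParent_lt) (by simp [Fin.ext_iff]) (by simp [Fin.ext_iff])
        (by simp [hm.ne']) (by simp [broomParent])
        (broomParent_of_lt m.lt_succ_self)
    simp [hroot, hm.ne']
  · rw [broom, mem_leavesFinset_parentGraph broomParent_zero (fun _ => broomParent_lt) hx,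
      mem_range_broomParent hm (by omega), not_lt]

theorem card_leavesFinset_broom (hm : 0 < m) (hn : m + 1 < n) :
    (leavesFinset (broom n m)).card = n - m := by
  have : leavesFinset (broom n m) = Finset.Ici ⟨m, by omega⟩ := by
    ext x
    rw [mem_leavesFinset_broom hm hn, Finset.mem_Ici, Fin.le_def]
  rw [this, Fin.card_Ici]

theorem one_le_steklovEig_broom (hm : 0 < m) (hn : m + 1 < n) {k : ℕ} (hk₂ : 2 < k)
    (hk : k ≤ n - m) : 1 ≤ steklovEig (broom n m) (leavesFinset (broom n m)) k := by
  refine one_le_steklovEig (S := {0, ⟨m, by omega⟩}) (fun x hx hxS => ?_)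
    (Finset.card_le_two.trans_lt hk₂) (by rwa [card_leavesFinset_broom hm hn])
  have hxm : x.1 ≠ m := fun h => hxS (by simp [Fin.ext_iff, h])
  have hmx : m < x.1 := ((mem_leavesFinset_broom hm hn).1 hx).lt_of_ne' hxm
  exact ⟨0, Finset.mem_insert_self _ _, broom_adj_zero hmx⟩

end Broom

/-- Let `b ≥ 3` and `n ≥ b + 1` be integers and let `k` be an integer with
`3 ≤ k ≤ b`. Then `σ_{k,max}(b,n) = 1`. -/
theorem stmt5 (b n k : ℕ) (hb : 3 ≤ b) (hn : b + 1 ≤ n) (hk1 : 3 ≤ k) (hk2 : k ≤ b) :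
    sigmaMax k b n = 1 := by
  have : NeZero n := ⟨by omega⟩
  have le_one (G : SimpleGraph (Fin n)) (hG : G.IsTree) (hGb : (leavesFinset G).card = b) :
      steklovEig G (leavesFinset G) k ≤ 1 :=
    steklovEig_leavesFinset_le_one hG.connected.preconnected (by rw [Fintype.card_fin]; omega)
      (by omega) (hGb ▸ hk2)
  let T := broom n (n - b)
  have card_leaves : (leavesFinset T).card = b := by
    rw [card_leavesFinset_broom (by omega) (by omega)]
    omega
  have one_le : 1 ≤ steklovEig T (leavesFinset T) k :=
    one_le_steklovEig_broom (by omega) (by omega) hk1 (by omega)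
  refine IsGreatest.csSup_eq ⟨⟨T, broom_isTree, card_leaves, ?_⟩, ?_⟩
  · exact le_antisymm one_le (le_one T broom_isTree card_leaves)
  · rintro _ ⟨G, hG, hGb, rfl⟩
    exact le_one G hG hGb
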